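/- Let X be a real Banach space that is uniformly convex and uniformly smooth, let 1 < p < ∞, and let M, N be closed linear subspaces of X. For every x ∈ X, the sequence generated by x₀ = x, x_{2n+1} = Π^p_M x_{2n}, x_{2n} = Π^p_N x_{2n−1} is Bregman monotone with respect to the closed linear subspace M ∩ N, i.e., D_p(z, x_k) ≤ D_p(z, x_l) for all k ≥ l and all z ∈ M ∩ N. -/

import Mathlib

open Filter Topology

noncomputable section

/-- The modulus of convexity of a normed space `X`. -/
def modConvex (X : Type*) [NormedAddCommGroup X] (ε : ℝ) : ℝ :=
  sInf {d : ℝ | ∃ x y : X, ‖x‖ = 1 ∧ ‖y‖ = 1 ∧ ε ≤ ‖x - y‖ ∧ d = 1 - ‖x + y‖ / 2}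

/-- The modulus of smoothness of a normed space `X`. -/
def modSmooth (X : Type*) [NormedAddCommGroup X] [NormedSpace ℝ X] (τ : ℝ) : ℝ :=
  sSup {d : ℝ | ∃ x y : X, ‖x‖ = 1 ∧ ‖y‖ = 1 ∧ d = (‖x + τ • y‖ + ‖x - τ • y‖) / 2 - 1}

/-- `X` is uniformly convex: the modulus of convexity is positive for positive ε. -/
def UnifConvex (X : Type*) [NormedAddCommGroup X] : Prop :=
  ∀ ε : ℝ, 0 < ε → ε ≤ 2 → 0 < modConvex X ε

/-- `X` is uniformly smooth: `ρ_X(τ)/τ → 0` as `τ → 0⁺`. -/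
def UnifSmooth (X : Type*) [NormedAddCommGroup X] [NormedSpace ℝ X] : Prop :=
  Tendsto (fun τ => modSmooth X τ / τ) (𝓝[>] (0 : ℝ)) (𝓝 0)

/-- `X` is uniformly convex of power type `ρ`. -/
def PowerConvex (X : Type*) [NormedAddCommGroup X] (ρ : ℝ) : Prop :=
  ∃ c > (0 : ℝ), ∀ ε ∈ Set.Icc (0 : ℝ) 2, c * ε ^ ρ ≤ modConvex X ε

/-- `X` is uniformly smooth of power type `σ` (with `σ > 1`). -/
def PowerSmooth (X : Type*) [NormedAddCommGroup X] [NormedSpace ℝ X] (σ : ℝ) : Prop :=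
  1 < σ ∧ ∃ C > (0 : ℝ), ∀ τ ∈ Set.Icc (0 : ℝ) 1, modSmooth X τ ≤ C * τ ^ σ

variable {X : Type*} [NormedAddCommGroup X] [NormedSpace ℝ X]

/-- The duality mapping `j_p`, the Fréchet derivative of `x ↦ (1/p)‖x‖^p`. -/
def dualityMap (p : ℝ) (x : X) : X →L[ℝ] ℝ :=
  fderiv ℝ (fun y : X => 1 / p * ‖y‖ ^ p) x

/-- The Bregman distance `D_p(x, y)`. -/
def bregmanDist (p : ℝ) (x y : X) : ℝ :=
  1 / p * ‖x‖ ^ p - 1 / p * ‖y‖ ^ p - dualityMap p y (x - y)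

/-- The Bregman projection of `x` onto the set `S`: the minimizer of `m ↦ D_p(m, x)` over `S`. -/
def bregmanProj (p : ℝ) (S : Set X) (x : X) : X :=
  letI : Nonempty X := ⟨x⟩
  Classical.epsilon fun y => y ∈ S ∧ ∀ m ∈ S, bregmanDist p y x ≤ bregmanDist p m x

/-- The Bregman distance `D_p(S, x)` from the point `x` to the set `S`. -/
def bregmanDistSet (p : ℝ) (S : Set X) (x : X) : ℝ :=
  bregmanDist p (bregmanProj p S x) x

/-- The metric projection of `x` onto the set `S`: the point of `S` nearest to `x`. -/
def metricProj (S : Set X) (x : X) : X :=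
  letI : Nonempty X := ⟨x⟩
  Classical.epsilon fun y => y ∈ S ∧ ∀ m ∈ S, ‖x - y‖ ≤ ‖x - m‖

/-- The sequence `x` is Bregman monotone with respect to the set `C`. -/
def BregmanMonotone (p : ℝ) {X : Type*} [NormedAddCommGroup X] [NormedSpace ℝ X]
    (C : Set X) (x : ℕ → X) : Prop :=
  ∀ z ∈ C, ∀ k l : ℕ, l ≤ k → bregmanDist p z (x k) ≤ bregmanDist p z (x l)

lemma modSmooth_le_aux (τ : ℝ) (u v : X) (hu : ‖u‖ = 1) (hv : ‖v‖ = 1) :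
    (‖u + τ • v‖ + ‖u - τ • v‖) / 2 - 1 ≤ modSmooth X τ := by
  apply le_csSup
  · refine ⟨|τ|, ?_⟩
    rintro d ⟨x, y, hx, hy, rfl⟩
    have h1 := norm_add_le x (τ • y)
    have h2 := norm_sub_le x (τ • y)
    rw [norm_smul, hx, hy, Real.norm_eq_abs] at h1 h2
    linarith
  · exact ⟨u, v, hu, hv, rfl⟩

lemma norm_differentiable_aux (hs : UnifSmooth X) (x : X) (hx : x ≠ 0) :
    DifferentiableAt ℝ (fun y : X => ‖y‖) x := by
  have hx0 : 0 < ‖x‖ := norm_pos_iff.mpr hx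
  obtain ⟨f, hf1, hfx⟩ := exists_dual_vector ℝ x hx0.ne'
  have hfle : ∀ y, f y ≤ ‖y‖ := fun y => by
    have := f.le_opNorm y
    rw [hf1, one_mul] at this
    exact (le_abs_self _).trans this
  simp only [RCLike.ofReal_real_eq_id, id] at hfx
  have key : ∀ h : X, h ≠ 0 → |‖x + h‖ - ‖x‖ - f h| ≤ 2 * ‖x‖ * modSmooth X (‖h‖ / ‖x‖) := by
    intro h hh
    have hh0 : 0 < ‖h‖ := norm_pos_iff.mpr hh
    have h1 := hfle (x + h)
    have h2 := hfle (x - h)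
    rw [map_add, hfx] at h1
    rw [map_sub, hfx] at h2
    have h3 := modSmooth_le_aux (‖h‖ / ‖x‖) (‖x‖⁻¹ • x) (‖h‖⁻¹ • h)
      (by rw [norm_smul, norm_inv, norm_norm]; field_simp)
      (by rw [norm_smul, norm_inv, norm_norm]; field_simp)
    have e : (‖h‖ / ‖x‖) • (‖h‖⁻¹ • h) = ‖x‖⁻¹ • h := by
      rw [smul_smul]; congr 1; field_simp
    rw [e, ← smul_add, ← smul_sub, norm_smul, norm_smul, norm_inv, norm_norm] at h3
    have h4 := mul_le_mul_of_nonneg_left h3 (by positivity : 0 ≤ 2 * ‖x‖)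
    have h5 : 2 * ‖x‖ * ((‖x‖⁻¹ * ‖x + h‖ + ‖x‖⁻¹ * ‖x - h‖) / 2 - 1)
        = ‖x + h‖ + ‖x - h‖ - 2 * ‖x‖ := by field_simp
    rw [h5] at h4
    rw [abs_of_nonneg (by linarith)]
    linarith
  refine HasFDerivAt.differentiableAt (f' := f) ?_
  rw [hasFDerivAt_iff_isLittleO_nhds_zero, Asymptotics.isLittleO_iff]
  intro c hc
  have hev : ∀ᶠ τ in 𝓝[>] (0 : ℝ), modSmooth X τ / τ < c / 2 :=
    hs.eventually (gt_mem_nhds (by positivity))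
  rw [eventually_nhdsWithin_iff] at hev
  have ht : Tendsto (fun h : X => ‖h‖ / ‖x‖) (𝓝 0) (𝓝 0) := by
    have : Continuous (fun h : X => ‖h‖ / ‖x‖) := by fun_prop
    simpa using this.tendsto 0
  filter_upwards [ht.eventually hev] with h hh
  by_cases h0 : h = 0
  · simp [h0]
  have hh0 : 0 < ‖h‖ := norm_pos_iff.mpr h0
  have := hh (by simp only [Set.mem_Ioi]; positivity)
  rw [div_lt_iff₀ (by positivity)] at this
  rw [Real.norm_eq_abs]
  refine (key h h0).trans ?_
  have h6 := mul_le_mul_of_nonneg_left this.le (by positivity : 0 ≤ 2 * ‖x‖)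
  refine h6.trans (le_of_eq ?_)
  field_simp

lemma F_differentiable_aux (hs : UnifSmooth X) (p : ℝ) (hp : 1 < p) (x : X) :
    HasFDerivAt (fun y : X => 1 / p * ‖y‖ ^ p) (dualityMap p x) x := by
  refine DifferentiableAt.hasFDerivAt ?_
  apply DifferentiableAt.const_mul
  by_cases hx : x = 0
  · subst hx
    refine HasFDerivAt.differentiableAt (f' := 0) ?_
    rw [hasFDerivAt_iff_isLittleO_nhds_zero]
    have h := (Real.hasDerivAt_rpow_const (x := 0) (p := p) (Or.inr hp.le))
    rw [hasDerivAt_iff_isLittleO_nhds_zero] at h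
    have h0 : (0 : ℝ) ^ p = 0 := Real.zero_rpow (by linarith)
    have h1 : (0 : ℝ) ^ (p - 1) = 0 := Real.zero_rpow (by linarith)
    simp only [h0, h1, zero_add, mul_zero, smul_zero, sub_zero] at h
    have ht : Tendsto (fun h : X => ‖h‖) (𝓝 0) (𝓝 0) := by
      simpa using (continuous_norm (E := X)).tendsto 0
    have := h.comp_tendsto ht
    simp only [norm_zero, h0, zero_add, sub_zero, ContinuousLinearMap.zero_apply]
    exact this.of_norm_right
  · exact (norm_differentiable_aux hs x hx).rpow_const (Or.inl (norm_ne_zero_iff.mpr hx))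

lemma F_convex_aux (p : ℝ) (hp : 1 < p) :
    ConvexOn ℝ Set.univ (fun y : X => 1 / p * ‖y‖ ^ p) := by
  have h : ConvexOn ℝ Set.univ (fun y : X => ‖y‖ ^ p) := by
    have hsub : (norm '' (Set.univ : Set X)) ⊆ Set.Ici 0 := by
      rintro _ ⟨y, -, rfl⟩; exact norm_nonneg y
    refine ⟨convex_univ, fun x _ y _ a b ha hb hab => ?_⟩
    have h1 : ‖a • x + b • y‖ ≤ a • ‖x‖ + b • ‖y‖ :=
      (convexOn_norm convex_univ).2 (Set.mem_univ x) (Set.mem_univ y) ha hb hab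
    exact (Real.rpow_le_rpow (norm_nonneg _) h1 (by linarith)).trans
      ((convexOn_rpow hp.le).2 (norm_nonneg x) (norm_nonneg y) ha hb hab)
  exact h.smul (by positivity)

lemma line_hasDerivAt_aux (hs : UnifSmooth X) (p : ℝ) (hp : 1 < p) (x h : X) :
    HasDerivAt (fun t : ℝ => 1 / p * ‖x + t • h‖ ^ p) (dualityMap p x h) 0 := by
  have hl : HasDerivAt (fun t : ℝ => x + t • h) h 0 := by
    simpa using ((hasDerivAt_id (0 : ℝ)).smul_const h).const_add x
  have hF := F_differentiable_aux hs p hp x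
  have e : x = x + (0 : ℝ) • h := by simp
  have hF' : HasFDerivAt (fun y : X => 1 / p * ‖y‖ ^ p) (dualityMap p x) (x + (0 : ℝ) • h) := by
    rw [← e]; exact hF
  exact hF'.comp_hasDerivAt (0 : ℝ) hl

lemma bregman_nonneg_aux (hs : UnifSmooth X) (p : ℝ) (hp : 1 < p) (y x : X) :
    0 ≤ bregmanDist p y x := by
  have hd := line_hasDerivAt_aux hs p hp x (y - x)
  have hc := (F_convex_aux (X := X) p hp).comp_affineMap (AffineMap.lineMap x y)
  have hc' : ConvexOn ℝ Set.univ (fun t : ℝ => 1 / p * ‖x + t • (y - x)‖ ^ p) := by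
    have e : (fun t : ℝ => 1 / p * ‖x + t • (y - x)‖ ^ p)
      = (fun y : X => 1 / p * ‖y‖ ^ p) ∘ (AffineMap.lineMap x y : ℝ →ᵃ[ℝ] X) := by
      funext t
      simp [AffineMap.lineMap_apply, add_comm]
    rw [e]; simpa using hc
  have := hc'.le_slope_of_hasDerivAt (Set.mem_univ 0) (Set.mem_univ 1) one_pos hd
  simp [slope_def_field] at this
  unfold bregmanDist
  simp only [map_sub, one_div] at *
  linarith

lemma unifConvex_aux (hc : UnifConvex X) : UniformConvexSpace X := by
  refine ⟨fun ε hε => ?_⟩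
  by_cases h2 : ε ≤ 2
  · refine ⟨2 * modConvex X ε, by have := hc ε hε h2; positivity, fun x hx y hy hxy => ?_⟩
    have : modConvex X ε ≤ 1 - ‖x + y‖ / 2 := by
      apply csInf_le
      · refine ⟨0, ?_⟩
        rintro d ⟨x, y, hx, hy, -, rfl⟩
        have := norm_add_le x y
        linarith
      · exact ⟨x, y, hx, hy, hxy, rfl⟩
    linarith
  · refine ⟨1, one_pos, fun x hx y hy hxy => ?_⟩
    have := norm_sub_le x y
    linarith

lemma exists_min_aux [CompleteSpace X] (hc : UnifConvex X) (p : ℝ) (hp : 1 < p)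
    (M : Submodule ℝ X) (hM : IsClosed (M : Set X)) (φ : X →L[ℝ] ℝ) :
    ∃ y ∈ M, ∀ m ∈ M, 1 / p * ‖y‖ ^ p - φ y ≤ 1 / p * ‖m‖ ^ p - φ m := by
  have := unifConvex_aux hc
  have hp0 : 0 < p := by linarith
  set G : X → ℝ := fun m => 1 / p * ‖m‖ ^ p - φ m with hG
  have hφ : ∀ m, φ m ≤ ‖φ‖ * ‖m‖ := fun m => (le_abs_self _).trans (φ.le_opNorm m)
  have hG0 : G 0 = 0 := by simp [hG, Real.zero_rpow hp0.ne']
  -- coercivity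
  obtain ⟨R, hR0, hR⟩ : ∃ R : ℝ, 0 < R ∧ ∀ m, R ≤ ‖m‖ → 1 ≤ G m := by
    have ht := (tendsto_rpow_atTop (show 0 < p - 1 by linarith)).eventually_ge_atTop
      (p * (‖φ‖ + 1))
    obtain ⟨R, hR⟩ := (ht.and (eventually_ge_atTop 1)).exists_forall_of_atTop
    refine ⟨max R 1, by positivity, fun m hm => ?_⟩
    obtain ⟨h1, h2⟩ := hR ‖m‖ ((le_max_left _ _).trans hm)
    have hpos : 0 < ‖m‖ := by linarith
    have e : ‖m‖ ^ p = ‖m‖ ^ (p - 1) * ‖m‖ := by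
      rw [← Real.rpow_add_one hpos.ne']; congr 1; ring
    have h3 : (‖φ‖ + 1) * ‖m‖ ≤ 1 / p * ‖m‖ ^ p := by
      rw [e]
      have := mul_le_mul_of_nonneg_right h1 hpos.le
      have := mul_le_mul_of_nonneg_left this (by positivity : 0 ≤ 1 / p)
      refine le_trans (le_of_eq ?_) this
      field_simp
    have := hφ m
    simp only [hG]
    linarith
  have hbdd : BddBelow (G '' (M : Set X)) := by
    refine ⟨-(‖φ‖ * R), ?_⟩
    rintro _ ⟨m, -, rfl⟩
    have h0 : 0 ≤ ‖φ‖ * R := by positivity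
    rcases le_total R ‖m‖ with h | h
    · have := hR m h; linarith
    · have h1 := hφ m
      have h2 : ‖φ‖ * ‖m‖ ≤ ‖φ‖ * R := by gcongr
      have h3 : 0 ≤ 1 / p * ‖m‖ ^ p := by positivity
      simp only [hG]; linarith
  have hne : (G '' (M : Set X)).Nonempty := ⟨_, 0, M.zero_mem, rfl⟩
  set I := sInf (G '' (M : Set X)) with hI
  have hIle : ∀ m ∈ M, I ≤ G m := fun m hm => csInf_le hbdd ⟨m, hm, rfl⟩
  obtain ⟨u, -, hu, huM⟩ := exists_seq_tendsto_sInf hne hbdd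
  choose m hmM hmu using huM
  have hGm : Tendsto (fun n => G (m n)) atTop (𝓝 I) := by simpa only [hmu] using hu
  have hbd : ∀ᶠ n in atTop, ‖m n‖ ∈ Set.Icc 0 R := by
    have hI0 : I < 1 := by have := hIle 0 M.zero_mem; rw [hG0] at this; linarith
    filter_upwards [hGm.eventually (gt_mem_nhds hI0)] with n hn
    refine ⟨norm_nonneg _, ?_⟩
    by_contra h
    have := hR (m n) (not_le.mp h).le
    linarith
  obtain ⟨r, hr, ψ, hψ, hmr⟩ := isCompact_Icc.tendsto_subseq' hbd.frequently
  set w : ℕ → X := fun n => m (ψ n) with hw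
  have hwM : ∀ n, w n ∈ M := fun n => hmM _
  have hwr : Tendsto (fun n => ‖w n‖) atTop (𝓝 r) := hmr
  have hGw : Tendsto (fun n => G (w n)) atTop (𝓝 I) := hGm.comp hψ.tendsto_atTop
  have hr0 : 0 ≤ r := hr.1
  have hφw : Tendsto (fun n => φ (w n)) atTop (𝓝 (1 / p * r ^ p - I)) := by
    have h1 : Tendsto (fun n => 1 / p * ‖w n‖ ^ p) atTop (𝓝 (1 / p * r ^ p)) :=
      (hwr.rpow_const (Or.inr hp0.le)).const_mul _
    refine (h1.sub hGw).congr fun n => ?_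
    simp [hG]
  set v : ℕ → X := fun n => (r / ‖w n‖) • w n with hv
  have hvr : ∀ n, ‖v n‖ ≤ r := fun n => by
    simp only [hv, norm_smul, norm_div, Real.norm_eq_abs, abs_norm, abs_of_nonneg hr0]
    by_cases h : ‖w n‖ = 0
    · simp [h, hr0]
    · rw [div_mul_cancel₀ _ h]
  have hvw : ∀ n, ‖w n - v n‖ ≤ |‖w n‖ - r| := fun n => by
    by_cases h : w n = 0
    · simp [hv, h]
    · have h' : ‖w n‖ ≠ 0 := norm_ne_zero_iff.mpr h
      have e : w n - v n = (1 - r / ‖w n‖) • w n := by simp [hv, sub_smul]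
      have e2 : ‖w n‖ - r = (1 - r / ‖w n‖) * ‖w n‖ := by field_simp
      rw [e, e2, norm_smul, abs_mul, abs_norm, Real.norm_eq_abs]
  have hd : Tendsto (fun n => |‖w n‖ - r|) atTop (𝓝 0) := by
    simpa using (hwr.sub_const r).abs
  have hvw0 : Tendsto (fun n => w n - v n) atTop (𝓝 0) := squeeze_zero_norm hvw hd
  have hcau : CauchySeq v := by
    rw [Metric.cauchySeq_iff]
    intro ε hε
    obtain ⟨δ, hδ, hδv⟩ := exists_forall_closed_ball_dist_add_le_two_mul_sub (E := X) hε r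
    by_cases hrz : r = 0
    · refine ⟨0, fun i _ j _ => ?_⟩
      have h1 := hvr i
      have h2 := hvr j
      have := dist_le_norm_add_norm (v i) (v j)
      linarith
    have hrpos : 0 < r := lt_of_le_of_ne hr0 (Ne.symm hrz)
    set s := max (r - δ / 4) 0 with hs
    have hsr : s < r := max_lt (by linarith) hrpos
    have hs0 : 0 ≤ s := le_max_right _ _
    set η := 1 / p * r ^ p - 1 / p * s ^ p with hη
    have hηpos : 0 < η := by
      have := Real.rpow_lt_rpow hs0 hsr hp0
      have := mul_lt_mul_of_pos_left this (by positivity : 0 < 1 / p)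
      linarith
    have ev1 : ∀ᶠ n in atTop, 1 / p * r ^ p - I - η < φ (w n) :=
      hφw.eventually (lt_mem_nhds (by linarith))
    have ev2 : ∀ᶠ n in atTop, |‖w n‖ - r| < δ / 4 := hd.eventually (gt_mem_nhds (by positivity))
    obtain ⟨K, hK⟩ := (ev1.and ev2).exists_forall_of_atTop
    refine ⟨K, fun i hi j hj => ?_⟩
    by_contra hcon
    rw [not_lt, dist_eq_norm] at hcon
    have hle := hδv (hvr i) (hvr j) hcon
    obtain ⟨hi1, hi2⟩ := hK i hi
    obtain ⟨hj1, hj2⟩ := hK j hj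
    have hmid := hIle ((1 / 2 : ℝ) • (w i + w j)) (M.smul_mem _ (M.add_mem (hwM i) (hwM j)))
    simp only [hG, map_smul, map_add, smul_eq_mul] at hmid
    have hsum : ‖w i + w j‖ ≤ ‖v i + v j‖ + (‖w i - v i‖ + ‖w j - v j‖) := by
      have e : w i + w j = (v i + v j) + ((w i - v i) + (w j - v j)) := by abel
      rw [e]
      exact (norm_add_le _ _).trans (by gcongr; exact norm_add_le _ _)
    have hn : ‖(1 / 2 : ℝ) • (w i + w j)‖ ≤ s := by
      rw [norm_smul]
      have h1 := hvw i
      have h2 := hvw j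
      have : ‖(1 / 2 : ℝ)‖ = 1 / 2 := by norm_num
      rw [this]
      refine le_trans ?_ (le_max_left _ _)
      linarith
    have hpw := Real.rpow_le_rpow (norm_nonneg _) hn hp0.le
    have := mul_le_mul_of_nonneg_left hpw (by positivity : 0 ≤ 1 / p)
    linarith
  obtain ⟨y, hy⟩ := cauchySeq_tendsto_of_complete hcau
  have hwy : Tendsto w atTop (𝓝 y) := by
    have := hvw0.add hy
    simpa using this
  have hGc : Continuous G := by
    have h1 : Continuous fun m : X => ‖m‖ ^ p := continuous_norm.rpow_const fun _ => Or.inr hp0.le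
    exact (h1.const_mul _).sub φ.continuous
  have hGy : G y = I := tendsto_nhds_unique ((hGc.tendsto y).comp hwy) hGw
  refine ⟨y, hM.mem_of_tendsto hwy (Eventually.of_forall hwM), fun z hz => ?_⟩
  have := hIle z hz
  rw [← hGy] at this
  exact this

lemma bregmanProj_step_aux [CompleteSpace X] (hc : UnifConvex X) (hs : UnifSmooth X)
    (p : ℝ) (hp : 1 < p) (M : Submodule ℝ X) (hM : IsClosed (M : Set X)) (x z : X) (hz : z ∈ M) :
    bregmanDist p z (bregmanProj p (M : Set X) x) ≤ bregmanDist p z x := by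
  have hspec : bregmanProj p (M : Set X) x ∈ (M : Set X) ∧ ∀ m ∈ (M : Set X),
      bregmanDist p (bregmanProj p (M : Set X) x) x ≤ bregmanDist p m x := by
    refine Classical.epsilon_spec
      (p := fun y => y ∈ (M : Set X) ∧ ∀ m ∈ (M : Set X), bregmanDist p y x ≤ bregmanDist p m x) ?_
    obtain ⟨y, hyM, hy⟩ := exists_min_aux hc p hp M hM (dualityMap p x)
    refine ⟨y, hyM, fun m hm => ?_⟩
    have := hy m hm
    simp only [bregmanDist, map_sub]
    linarith
  set y := bregmanProj p (M : Set X) x with hydef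
  obtain ⟨hyM, hmin⟩ := hspec
  have hvar : ∀ h ∈ M, dualityMap p y h = dualityMap p x h := by
    intro h hh
    have hd := (line_hasDerivAt_aux hs p hp y h).sub
      ((hasDerivAt_id (0 : ℝ)).mul_const (dualityMap p x h))
    have hloc : IsLocalMin ((fun t : ℝ => 1 / p * ‖y + t • h‖ ^ p) -
        fun t : ℝ => id t * dualityMap p x h) 0 := by
      refine Eventually.of_forall fun t => ?_
      have := hmin (y + t • h) (M.add_mem hyM (M.smul_mem t hh))
      simp only [bregmanDist, map_sub, map_add, map_smul, smul_eq_mul] at this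
      simp only [Pi.sub_apply, id, zero_smul, add_zero, zero_mul]
      linarith
    have := hloc.hasDerivAt_eq_zero hd
    linarith
  have h1 := bregman_nonneg_aux hs p hp y x
  have h2 := hvar (z - y) (M.sub_mem hz hyM)
  simp only [bregmanDist, map_sub] at *
  linarith

theorem statement12 {X : Type*} [NormedAddCommGroup X] [NormedSpace ℝ X] [CompleteSpace X]
    (hconv : UnifConvex X) (hsmooth : UnifSmooth X) (p : ℝ) (hp : 1 < p)
    (M N : Submodule ℝ X) (hM : IsClosed (M : Set X)) (hN : IsClosed (N : Set X))
    (a : X) (x : ℕ → X) (hx0 : x 0 = a)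
    (hodd : ∀ n : ℕ, x (2 * n + 1) = bregmanProj p (M : Set X) (x (2 * n)))
    (heven : ∀ n : ℕ, x (2 * n + 2) = bregmanProj p (N : Set X) (x (2 * n + 1))) :
    BregmanMonotone p (((M ⊓ N : Submodule ℝ X) : Set X)) x := by
  intro z hz k l hlk
  have hanti : Antitone fun n => bregmanDist p z (x n) := by
    refine antitone_nat_of_succ_le fun n => ?_
    rcases Nat.even_or_odd' n with ⟨j, rfl | rfl⟩
    · rw [hodd j]
      exact bregmanProj_step_aux hconv hsmooth p hp M hM _ z hz.1
    · have := heven j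
      rw [show 2 * j + 1 + 1 = 2 * j + 2 from rfl, this]
      exact bregmanProj_step_aux hconv hsmooth p hp N hN _ z hz.2
  exact hanti hlk
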